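/- RNN lower bound for the copying problem: fix K ∈ ℕ₊ and ε ∈ (0, 1/2), and let ρ(t) = 1 if t = 2^K and 0 otherwise. Suppose u(t) = cᵀW^{t−1}U is an m²-term exponential sum (W ∈ ℝ^{m×m} diagonalisable with positive real eigenvalues, c, U ∈ ℝ^m) satisfying sup_{t≥0}|ρ(t) − u(t)| < ε. Then m² > 2^{K−1}·(1 − 2ε)/(1 + ε). -/

import Mathlib

open Matrix

/-!
A readout `c (f ^ t x)` of an endomorphism `f` such that `p(f) x = 0`, where `p` has degree `d` and
only positive real roots, obeys a discrete Descartes rule of signs: passing from `v` to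
`v (t + 1) - γ v t` with `γ > 0` loses at most one sign change, and doing so once for each root
leaves the zero sequence. A readout bounded by `M` therefore has total variation at most `2 d M`.

To bound one increment at time `N`, expand the orbit points `f ^ s x`, `s ≤ N + 1`, in terms of at
most `d` of them with coordinate functionals bounded by `1` (Fekete points: maximise a determinant).
Applying `f ^ (N - s)` gives, for each of the `N + 1` values of `s`, a bound on the same increment
`c (f ^ (N + 1) x) - c (f ^ N x)` by `M` times the total increment at `s` of the coordinate
functionals. Those are readouts bounded by `1`, so summing over `s` gives the Markov inequality
`(N + 1) |c (f ^ (N + 1) x) - c (f ^ N x)| ≤ 2 d² M`, which the jump of the impulse violates unless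
`d` is large.
-/

open Finset Module Polynomial Submodule

section Fekete

variable {ι E : Type*} [Finite ι] [AddCommGroup E] [Module ℝ E]

theorem exists_basis_mem_range_abs_coord_le_one {φ : ι → E} (hφ : span ℝ (Set.range φ) = ⊤) :
    ∃ b : Basis (Fin (finrank ℝ E)) ℝ E,
      (∀ j, b j ∈ Set.range φ) ∧ ∀ j s, |b.coord j (φ s)| ≤ 1 := by
  have : FiniteDimensional ℝ E := .of_fg_top (hφ ▸ fg_span (Set.finite_range φ))
  obtain ⟨κ, a, -, ha_span, ha_indep⟩ := exists_linearIndependent' ℝ φ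
  let b₀ := Basis.mk ha_indep (ha_span.trans hφ).ge
  let reindexing := b₀.indexEquiv (finBasis ℝ E)
  let e := b₀.reindex reindexing
  let I₀ := a ∘ reindexing.symm
  have hI₀ : e.det (φ ∘ I₀) = 1 := by
    have : φ ∘ I₀ = e := by ext; simp [e, b₀, I₀]
    rw [this, e.det_self]
  have : Nonempty (Fin (finrank ℝ E) → ι) := ⟨I₀⟩
  obtain ⟨I, hI_max⟩ := Finite.exists_max fun I : Fin (finrank ℝ E) → ι ↦ |e.det (φ ∘ I)|
  have hdet_pos : 0 < |e.det (φ ∘ I)| :=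
    calc 0 < |e.det (φ ∘ I₀)| := by simp [hI₀]
      _ ≤ |e.det (φ ∘ I)| := hI_max I₀
  obtain ⟨h_indep, h_span⟩ := e.is_basis_iff_det.2 (abs_pos.1 hdet_pos).isUnit
  refine ⟨.mk h_indep h_span.ge, fun j ↦ ⟨I j, by simp⟩, fun j s ↦ ?_⟩
  have hcramer : e.det (φ ∘ I) * (Basis.mk h_indep h_span.ge).coord j (φ s) =
      e.det (φ ∘ Function.update I j s) := by
    rw [Function.comp_update]
    exact LinearMap.congr_fun (e.det_smul_mk_coord_eq_det_update h_indep h_span.ge j) (φ s)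
  refine le_of_mul_le_mul_left ?_ hdet_pos
  rw [← abs_mul, hcramer, mul_one]
  exact hI_max _

theorem exists_dual_abs_le_one_and_eq_sum_smul (φ : ι → E) :
    ∃ (I : Fin (finrank ℝ (span ℝ (Set.range φ))) → ι)
      (l : Fin (finrank ℝ (span ℝ (Set.range φ))) → Dual ℝ E),
      (∀ j s, |l j (φ s)| ≤ 1) ∧ ∀ s, φ s = ∑ j, l j (φ s) • φ (I j) := by
  let φ' (s : ι) : span ℝ (Set.range φ) := ⟨φ s, subset_span ⟨s, rfl⟩⟩
  have hφ' : span ℝ (Set.range φ') = ⊤ := by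
    rw [← span_span_coe_preimage]
    congr 1
    ext y
    simp [φ', Subtype.ext_iff]
  obtain ⟨b, hb_mem, hb_le⟩ := exists_basis_mem_range_abs_coord_le_one hφ'
  choose I hI using hb_mem
  choose l hl using fun j ↦ (b.coord j).exists_extend
  have hl_coord (j s) : l j (φ s) = b.coord j (φ' s) := by rw [← hl j]; rfl
  refine ⟨I, l, fun j s ↦ hl_coord j s ▸ hb_le j s, fun s ↦ ?_⟩
  have hsum := congrArg Subtype.val (b.sum_repr (φ' s))
  simpa [hl_coord, ← hI, φ'] using hsum.symm

end Fekete

-- A discrete Rolle theorem for `σ * v t / γ ^ t`, stated without the division.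
theorem exists_pos_mul_sub_mul {v : ℕ → ℝ} {γ σ : ℝ} {a b : ℕ} (hγ : 0 < γ) (hab : a ≤ b)
    (ha : 0 < -σ * v a) (hb : 0 < σ * v b) :
    ∃ r, a ≤ r ∧ r < b ∧ 0 < σ * (v (r + 1) - γ * v r) := by
  by_contra! hstep
  have hneg : ∀ t, a ≤ t → t ≤ b → σ * v t < 0 := by
    intro t hat
    induction t, hat using Nat.le_induction with
    | base => exact fun _ ↦ by linarith
    | succ t hat ih =>
      intro htb
      have := mul_neg_of_pos_of_neg hγ (ih (by omega))
      linarith [hstep t hat (by omega)]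
  exact (hneg b hab le_rfl).not_gt hb

/-- `AlternatesAt v k σ s`: the sequence `v` takes nonzero values of alternating signs along some
`k + 1` increasing indices, the last of which is `s`, where `v` has the sign of `σ`. The recursion
removes the last index, so that sign changes can be appended and counted by induction. -/
def AlternatesAt (v : ℕ → ℝ) : ℕ → ℝ → ℕ → Prop
  | 0, σ, s => 0 < σ * v s
  | k + 1, σ, s => 0 < σ * v s ∧ ∃ r < s, AlternatesAt v k (-σ) r

namespace AlternatesAt

variable {v : ℕ → ℝ} {k : ℕ} {σ : ℝ} {s : ℕ}

theorem mul_pos (h : AlternatesAt v k σ s) : 0 < σ * v s := by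
  cases k with
  | zero => exact h
  | succ k => exact h.1

theorem exists_lt_sub_mul {γ : ℝ} (hγ : 0 < γ) (h : AlternatesAt v (k + 1) σ s) :
    ∃ r < s, AlternatesAt (fun t ↦ v (t + 1) - γ * v t) k σ r := by
  induction k generalizing σ s with
  | zero =>
    obtain ⟨hs, a, has, ha⟩ := h
    obtain ⟨r, -, hrs, hr⟩ := exists_pos_mul_sub_mul hγ has.le ha.mul_pos hs
    exact ⟨r, hrs, hr⟩
  | succ k ih =>
    obtain ⟨hs, a, has, ha⟩ := h
    obtain ⟨r, har, hrs, hr⟩ := exists_pos_mul_sub_mul hγ has.le ha.mul_pos hs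
    obtain ⟨q, hqa, hq⟩ := ih ha
    exact ⟨r, hrs, hr, q, hqa.trans_le har, hq⟩

end AlternatesAt

theorem exists_abs_eq_one_and_abs_eq_mul (x : ℝ) : ∃ σ : ℝ, |σ| = 1 ∧ |x| = σ * x := by
  rcases le_total 0 x with hx | hx
  · exact ⟨1, abs_one, by rw [abs_of_nonneg hx, one_mul]⟩
  · exact ⟨-1, by simp, by rw [abs_of_nonpos hx, neg_one_mul]⟩

theorem mul_le_of_abs_eq_one_of_abs_le {σ x M : ℝ} (hσ : |σ| = 1) (hx : |x| ≤ M) : σ * x ≤ M :=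
  calc σ * x ≤ |σ * x| := le_abs_self _
    _ = |x| := by rw [abs_mul, hσ, one_mul]
    _ ≤ M := hx

-- Every completed monotone run of `v` contributes at most `2 * M`. The current run, in direction
-- `σ`, started at some `b` with `σ * v b ≥ -M`, so it contributes at most `M + σ * v l`.
theorem sum_abs_sub_eq_zero_or_exists_alternatesAt {v : ℕ → ℝ} {M : ℝ} {l : ℕ}
    (hv : ∀ s ≤ l, |v s| ≤ M) :
    ∑ s ∈ range l, |v (s + 1) - v s| = 0 ∨
      ∃ k σ, |σ| = 1 ∧ (∃ s < l, AlternatesAt (fun t ↦ v (t + 1) - v t) k σ s) ∧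
        ∑ s ∈ range l, |v (s + 1) - v s| ≤ (2 * k + 1) * M + σ * v l := by
  induction l with
  | zero => simp
  | succ l ih =>
    have hvl : |v l| ≤ M := hv l l.le_succ
    rw [sum_range_succ]
    rcases ih fun s hs ↦ hv s (hs.trans l.le_succ) with hzero | ⟨k, σ, hσ, ⟨s, hsl, hs⟩, hle⟩
    · rcases eq_or_ne (v (l + 1) - v l) 0 with hd | hd
      · left; simp [hzero, hd]
      · obtain ⟨σ, hσ, hσd⟩ := exists_abs_eq_one_and_abs_eq_mul (v (l + 1) - v l)
        refine .inr ⟨0, σ, hσ, ⟨l, l.lt_succ_self, (abs_pos.2 hd).trans_eq hσd⟩, ?_⟩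
        have := mul_le_of_abs_eq_one_of_abs_le (σ := -σ) (by rwa [abs_neg]) hvl
        rw [hzero, hσd]
        push_cast
        linarith
    · rcases le_or_gt 0 (σ * (v (l + 1) - v l)) with hd | hd
      · refine .inr ⟨k, σ, hσ, ⟨s, hsl.trans l.lt_succ_self, hs⟩, ?_⟩
        have : |v (l + 1) - v l| = σ * (v (l + 1) - v l) := by
          rw [← abs_of_nonneg hd, abs_mul, hσ, one_mul]
        linarith
      · refine .inr ⟨k + 1, -σ, by rwa [abs_neg],
          ⟨l, l.lt_succ_self, by linarith, s, hsl, by rwa [neg_neg]⟩, ?_⟩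
        have : |v (l + 1) - v l| = -(σ * (v (l + 1) - v l)) := by
          rw [← abs_of_neg hd, abs_mul, hσ, one_mul]
        have := mul_le_of_abs_eq_one_of_abs_le hσ hvl
        push_cast
        linarith

theorem sum_abs_sub_le_of_alternatesAt_lt {v : ℕ → ℝ} {M : ℝ} {l n : ℕ} (hv : ∀ s ≤ l, |v s| ≤ M)
    (hn : ∀ k σ s, AlternatesAt (fun t ↦ v (t + 1) - v t) k σ s → k < n) :
    ∑ s ∈ range l, |v (s + 1) - v s| ≤ 2 * n * M := by
  have hM : 0 ≤ M := (abs_nonneg _).trans (hv l le_rfl)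
  rcases sum_abs_sub_eq_zero_or_exists_alternatesAt hv with hzero | ⟨k, σ, hσ, ⟨s, -, hs⟩, hle⟩
  · rw [hzero]; positivity
  · have hkn : (k : ℝ) + 1 ≤ n := by exact_mod_cast hn k σ s hs
    have hσv : σ * v l ≤ M := mul_le_of_abs_eq_one_of_abs_le hσ (hv l le_rfl)
    calc ∑ s ∈ range l, |v (s + 1) - v s| ≤ (2 * k + 1) * M + σ * v l := hle
      _ ≤ 2 * (k + 1) * M := by linarith
      _ ≤ 2 * n * M := by gcongr

theorem finrank_span_range_pow_apply_le_natDegree {K E ι : Type*} [Field K] [AddCommGroup E]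
    [Module K E] {f : End K E} {x : E} {p : K[X]} (hp : p.Monic) (hx : aeval f p x = 0)
    (t : ι → ℕ) : finrank K (span K (Set.range fun i ↦ (f ^ t i) x)) ≤ p.natDegree := by
  let applyAeval : K[X] →ₗ[K] E := LinearMap.applyₗ x ∘ₗ (aeval f).toLinearMap
  have hreduce (n : ℕ) : applyAeval (X ^ n %ₘ p) = (f ^ n) x := by
    have hdiv := congrArg (fun q ↦ aeval f q x) (modByMonic_add_div (X ^ n) p)
    simpa [applyAeval, mul_comm p, hx] using hdiv
  have hle : span K (Set.range fun i ↦ (f ^ t i) x) ≤ (degreeLT K p.natDegree).map applyAeval := by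
    rw [span_le]
    rintro _ ⟨i, rfl⟩
    refine ⟨X ^ t i %ₘ p, mem_degreeLT.2 ?_, hreduce _⟩
    rw [← degree_eq_natDegree hp.ne_zero]
    exact degree_modByMonic_lt _ hp
  have := (degreeLTEquiv K p.natDegree).symm.finiteDimensional
  calc finrank K (span K (Set.range fun i ↦ (f ^ t i) x))
      ≤ finrank K ((degreeLT K p.natDegree).map applyAeval) := finrank_mono hle
    _ ≤ finrank K (degreeLT K p.natDegree) := finrank_map_le _ _
    _ = p.natDegree := by rw [(degreeLTEquiv K p.natDegree).finrank_eq, finrank_fin_fun]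

section Readout

variable {E : Type*} [AddCommGroup E] [Module ℝ E] {f : End ℝ E} {x : E} {c : Dual ℝ E}

theorem lt_card_of_alternatesAt_readout {R : Multiset ℝ} (hR : ∀ γ ∈ R, 0 < γ)
    (hx : aeval f (R.map fun γ ↦ X - C γ).prod x = 0) {k : ℕ} {σ : ℝ} {s : ℕ}
    (h : AlternatesAt (fun t ↦ c ((f ^ t) x)) k σ s) : k < R.card := by
  induction R using Multiset.induction generalizing x k s with
  | empty =>
    obtain rfl : x = 0 := by simpa using hx
    simpa using h.mul_pos
  | cons γ R ih =>
    rw [Multiset.card_cons]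
    cases k with
    | zero => exact R.card.succ_pos
    | succ k =>
      obtain ⟨r, -, hr⟩ := h.exists_lt_sub_mul (hR γ (R.mem_cons_self γ))
      have hdiff (t : ℕ) : c ((f ^ (t + 1)) x) - γ * c ((f ^ t) x) = c ((f ^ t) (f x - γ • x)) := by
        simp [pow_succ]
      simp only [hdiff] at hr
      refine Nat.succ_lt_succ (ih (fun γ' hγ' ↦ hR γ' (Multiset.mem_cons_of_mem hγ')) ?_ hr)
      rw [Multiset.map_cons, Multiset.prod_cons, mul_comm] at hx
      simpa using hx

variable {p : ℝ[X]} {M : ℝ}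

theorem sum_abs_readout_sub_le (hp : p.Splits) (hp_monic : p.Monic)
    (hpos : ∀ γ ∈ p.roots, 0 < γ) (hx : aeval f p x = 0) {l : ℕ}
    (hM : ∀ s ≤ l, |c ((f ^ s) x)| ≤ M) :
    ∑ s ∈ range l, |c ((f ^ (s + 1)) x) - c ((f ^ s) x)| ≤ 2 * p.natDegree * M := by
  rw [hp.natDegree_eq_card_roots]
  refine sum_abs_sub_le_of_alternatesAt_lt hM fun k σ s hs ↦ ?_
  have hdiff (t : ℕ) :
      c ((f ^ (t + 1)) x) - c ((f ^ t) x) = c ((f ^ t) (aeval f (X - 1 : ℝ[X]) x)) := by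
    simp [pow_succ]
  simp only [hdiff] at hs
  refine lt_card_of_alternatesAt_readout hpos ?_ hs
  rw [← hp.eq_prod_roots_of_monic hp_monic, ← Module.End.mul_apply, ← map_mul, mul_comm, map_mul,
    Module.End.mul_apply, hx, map_zero]

theorem abs_readout_sub_le_sum_abs_sub_mul {κ : Type*} [Fintype κ] {I : κ → ℕ}
    {l : κ → Dual ℝ E} {N s : ℕ} (hsN : s ≤ N)
    (hexpand : ∀ r ≤ N + 1, (f ^ r) x = ∑ j, l j ((f ^ r) x) • (f ^ I j) x)
    (hM : ∀ t, |c ((f ^ t) x)| ≤ M) :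
    |c ((f ^ (N + 1)) x) - c ((f ^ N) x)| ≤
      ∑ j, |l j ((f ^ (s + 1)) x) - l j ((f ^ s) x)| * M := by
  obtain ⟨t, rfl⟩ : ∃ t, N = t + s := ⟨N - s, by omega⟩
  have hshift {r : ℕ} (hr : r ≤ t + s + 1) :
      c ((f ^ (t + r)) x) = ∑ j, l j ((f ^ r) x) * c ((f ^ (t + I j)) x) := by
    simpa [pow_add] using congrArg (fun y ↦ c ((f ^ t) y)) (hexpand r hr)
  rw [add_assoc, hshift (by omega), hshift (by omega), ← sum_sub_distrib]
  refine (abs_sum_le_sum_abs _ _).trans (sum_le_sum fun j _ ↦ ?_)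
  rw [← sub_mul, abs_mul]
  gcongr
  exact hM _

theorem add_one_mul_abs_readout_sub_le (hp : p.Splits) (hp_monic : p.Monic)
    (hpos : ∀ γ ∈ p.roots, 0 < γ) (hx : aeval f p x = 0) (hM : ∀ s, |c ((f ^ s) x)| ≤ M) (N : ℕ) :
    (N + 1) * |c ((f ^ (N + 1)) x) - c ((f ^ N) x)| ≤ 2 * p.natDegree ^ 2 * M := by
  have hM₀ : 0 ≤ M := (abs_nonneg _).trans (hM 0)
  obtain ⟨I, l, hl, hexpand⟩ :=
    exists_dual_abs_le_one_and_eq_sum_smul fun s : Fin (N + 2) ↦ (f ^ (s : ℕ)) x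
  have hvar (j) : ∑ s ∈ range (N + 1), |l j ((f ^ (s + 1)) x) - l j ((f ^ s) x)| ≤
      2 * p.natDegree := by
    simpa using sum_abs_readout_sub_le hp hp_monic hpos hx (M := 1) fun s hs ↦
      hl j ⟨s, by omega⟩
  calc (N + 1) * |c ((f ^ (N + 1)) x) - c ((f ^ N) x)|
      = ∑ _s ∈ range (N + 1), |c ((f ^ (N + 1)) x) - c ((f ^ N) x)| := by simp
    _ ≤ ∑ s ∈ range (N + 1), ∑ j, |l j ((f ^ (s + 1)) x) - l j ((f ^ s) x)| * M :=
      sum_le_sum fun s hs ↦ abs_readout_sub_le_sum_abs_sub_mul (I := fun j ↦ I j)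
        (mem_range_succ_iff.1 hs) (fun r hr ↦ hexpand ⟨r, by omega⟩) hM
    _ = ∑ j, (∑ s ∈ range (N + 1), |l j ((f ^ (s + 1)) x) - l j ((f ^ s) x)|) * M := by
      rw [sum_comm]; simp only [sum_mul]
    _ ≤ ∑ _j, 2 * p.natDegree * M := by gcongr with j; exact hvar j
    _ = finrank ℝ (span ℝ (Set.range fun s : Fin (N + 2) ↦ (f ^ (s : ℕ)) x)) *
        (2 * p.natDegree * M) := by simp
    _ ≤ p.natDegree * (2 * p.natDegree * M) := by
      gcongr
      exact finrank_span_range_pow_apply_le_natDegree hp_monic hx _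
    _ = 2 * p.natDegree ^ 2 * M := by ring

end Readout

section Matrix

variable {ι : Type*} [Fintype ι] [DecidableEq ι]

theorem add_one_mul_abs_dotProduct_pow_sub_le {W : Matrix ι ι ℝ} (hW : W.charpoly.Splits)
    (hpos : ∀ γ ∈ W.charpoly.roots, 0 < γ) {c U : ι → ℝ} {M : ℝ}
    (hM : ∀ s, |c ⬝ᵥ W ^ s *ᵥ U| ≤ M) (N : ℕ) :
    (N + 1) * |c ⬝ᵥ W ^ (N + 1) *ᵥ U - c ⬝ᵥ W ^ N *ᵥ U| ≤ 2 * Fintype.card ι ^ 2 * M := by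
  have hkill : aeval W.toLin' W.charpoly U = 0 := by
    rw [← Matrix.charpoly_toLin', LinearMap.aeval_self_charpoly, LinearMap.zero_apply]
  have := add_one_mul_abs_readout_sub_le (c := dotProductBilin ℝ ℝ c) hW
    W.charpoly_monic hpos hkill (by simpa [← toLin'_pow] using hM) N
  simpa [← toLin'_pow, charpoly_natDegree_eq_dim] using this

theorem charpoly_conj_diagonal {R : Type*} [CommRing R] {P : Matrix ι ι R} (hP : IsUnit P.det)
    (d : ι → R) : (P * diagonal d * P⁻¹).charpoly = ∏ i, (X - C (d i)) := by
  rw [charpoly_mul_comm, nonsing_inv_mul_cancel_left _ _ hP, charpoly_diagonal]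

theorem splits_charpoly_conj_diagonal {R : Type*} [CommRing R] {P : Matrix ι ι R}
    (hP : IsUnit P.det) (d : ι → R) : (P * diagonal d * P⁻¹).charpoly.Splits :=
  charpoly_conj_diagonal hP d ▸ .prod fun i _ ↦ .X_sub_C (d i)

theorem roots_charpoly_conj_diagonal {R : Type*} [CommRing R] [IsDomain R] {P : Matrix ι ι R}
    (hP : IsUnit P.det) (d : ι → R) :
    (P * diagonal d * P⁻¹).charpoly.roots = univ.val.map d := by
  rw [charpoly_conj_diagonal hP, ← roots_multiset_prod_X_sub_C (univ.val.map d), Multiset.map_map]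
  rfl

theorem stmt15_general {W : Matrix ι ι ℝ} (hW : W.charpoly.Splits)
    (hpos : ∀ γ ∈ W.charpoly.roots, 0 < γ) (c U : ι → ℝ) {T : ℕ} (hT : 1 ≤ T) {ε : ℝ}
    (happrox : ∀ t : ℕ, 1 ≤ t → |(if t = T then (1 : ℝ) else 0) - c ⬝ᵥ W ^ (t - 1) *ᵥ U| < ε) :
    (T : ℝ) / 2 * (1 - 2 * ε) / (1 + ε) < Fintype.card ι ^ 2 := by
  obtain ⟨N, rfl⟩ : ∃ N, T = N + 1 := ⟨T - 1, by omega⟩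
  have happrox' (s : ℕ) : |(if s = N then (1 : ℝ) else 0) - c ⬝ᵥ W ^ s *ᵥ U| < ε := by
    simpa using happrox (s + 1) (by omega)
  have hε : 0 < ε := (abs_nonneg _).trans_lt (happrox' 0)
  have hbound (s : ℕ) : |c ⬝ᵥ W ^ s *ᵥ U| ≤ 1 + ε := by
    have h := abs_lt.1 (happrox' s)
    rw [abs_le]
    split_ifs at h <;> constructor <;> linarith
  have hjump : 1 - 2 * ε < |c ⬝ᵥ W ^ (N + 1) *ᵥ U - c ⬝ᵥ W ^ N *ᵥ U| := by
    have hN := abs_lt.1 (happrox' N)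
    have hN1 := abs_lt.1 (happrox' (N + 1))
    rw [if_pos rfl] at hN
    rw [if_neg N.succ_ne_self] at hN1
    exact lt_abs.2 (.inr (by linarith))
  rw [div_lt_iff₀ (by linarith)]
  calc ((N + 1 : ℕ) : ℝ) / 2 * (1 - 2 * ε)
      < ((N + 1 : ℕ) : ℝ) / 2 * |c ⬝ᵥ W ^ (N + 1) *ᵥ U - c ⬝ᵥ W ^ N *ᵥ U| := by gcongr
    _ ≤ Fintype.card ι ^ 2 * (1 + ε) := by
      have := add_one_mul_abs_dotProduct_pow_sub_le hW hpos hbound N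
      push_cast
      linarith

end Matrix

/-- RNN lower bound for the copying problem: if the linear RNN readout
`u(t) = cᵀ W^{t−1} U` (with `W` diagonalisable with positive eigenvalues)
approximates the impulse `ρ(t) = δ(t − 2^K)` uniformly within `ε < 1/2`,
then `m² > 2^{K−1}(1 − 2ε)/(1 + ε)`. -/
theorem stmt15 (K m : ℕ) (hK : 1 ≤ K) (ε : ℝ) (hε : 0 < ε) (hε2 : ε < 1 / 2)
    (W P : Matrix (Fin m) (Fin m) ℝ) (dg : Fin m → ℝ) (c U : Fin m → ℝ)
    (hP : IsUnit P.det) (hdg : ∀ i, 0 < dg i)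
    (hW : W = P * Matrix.diagonal dg * P⁻¹)
    (happrox : ∀ t : ℕ, 1 ≤ t →
      |(if t = 2 ^ K then (1 : ℝ) else 0) - c ⬝ᵥ (W ^ (t - 1)).mulVec U| < ε) :
    (m : ℝ) ^ 2 > 2 ^ (K - 1) * (1 - 2 * ε) / (1 + ε) := by
  subst hW
  obtain ⟨k, rfl⟩ := Nat.exists_eq_add_of_le' hK
  simpa [pow_succ] using stmt15_general (splits_charpoly_conj_diagonal hP dg)
    (by simpa [roots_charpoly_conj_diagonal hP] using hdg) c U Nat.one_le_two_pow happrox
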